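/- arXiv:1601.07113 — 2 statements merged into one kernel-verified Lean document; each statement's English description precedes it below -/
import Mathlib

section
/- Let Φ : H → ℝ be convex and twice continuously differentiable, let α, β > 0 and t₀ > 0, and let (x₀, ẋ₀) ∈ H × H. Then there exists a unique twice continuously differentiable curve x : [t₀, ∞) → H satisfying ẍ(t) + (α/t)ẋ(t) + β∇²Φ(x(t))ẋ(t) + ∇Φ(x(t)) = 0 for all t ≥ t₀, together with the initial conditions x(t₀) = x₀ and ẋ(t₀) = ẋ₀. -/
open Filter MeasureTheory Set
open scoped Topology RealInnerProductSpace

variable {H : Type*} [NormedAddCommGroup H] [InnerProductSpace ℝ H] [CompleteSpace H]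

/-- `x`, together with its first and second derivatives `x'`, `x''`, is a twice continuously
differentiable solution of (DIN-AVD) on `[t₀, ∞)`:
`ẍ(t) + (α/t) ẋ(t) + β ∇²Φ(x(t)) ẋ(t) + ∇Φ(x(t)) = 0`. -/
def IsDINAVDSolution (α β t₀ : ℝ) (Φ : H → ℝ) (x x' x'' : ℝ → H) : Prop :=
  (∀ t ∈ Set.Ici t₀, HasDerivAt x (x' t) t) ∧
  (∀ t ∈ Set.Ici t₀, HasDerivAt x' (x'' t) t) ∧
  ContinuousOn x'' (Set.Ici t₀) ∧
  ∀ t ∈ Set.Ici t₀,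
    x'' t + (α / t) • x' t + β • (fderiv ℝ (gradient Φ) (x t)) (x' t)
      + gradient Φ (x t) = 0

/-- First order reformulation, with `w = x' + β G(x)`. -/
def DSys (G : H → H) (α β : ℝ) (x w : ℝ → H) (t : ℝ) : Prop :=
  HasDerivAt x (w t - β • G (x t)) t ∧
  HasDerivAt w ((β⁻¹ - α / t) • (w t - β • G (x t)) - β⁻¹ • w t) t

lemma grad_mono (Φ : H → ℝ) (hconv : ConvexOn ℝ Set.univ Φ) (hΦ : ContDiff ℝ 2 Φ) (x y : H) :
    0 ≤ ⟪gradient Φ x - gradient Φ y, x - y⟫ := by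
  have key : ∀ a b : H, Φ a + ⟪gradient Φ a, b - a⟫ ≤ Φ b := by
    intro a b
    have hc : ConvexOn ℝ Set.univ (Φ ∘ (AffineMap.lineMap a b : ℝ →ᵃ[ℝ] H)) := by
      simpa using hconv.comp_affineMap (AffineMap.lineMap a b : ℝ →ᵃ[ℝ] H)
    have hd : HasDerivAt (Φ ∘ (AffineMap.lineMap a b : ℝ →ᵃ[ℝ] H)) ⟪gradient Φ a, b - a⟫ 0 := by
      have h1 : HasFDerivAt Φ (fderiv ℝ Φ a) (AffineMap.lineMap a b (0:ℝ)) := by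
        simpa using (hΦ.differentiable (by norm_num) a).hasFDerivAt
      have h2 : HasDerivAt (AffineMap.lineMap a b : ℝ →ᵃ[ℝ] H) (b - a) (0:ℝ) :=
        AffineMap.hasDerivAt_lineMap
      have := h1.comp_hasDerivAt (0:ℝ) h2
      rw [← toDual_gradient] at this
      simpa using this
    have := hc.le_slope_of_hasDerivAt (mem_univ 0) (mem_univ 1) one_pos hd
    simp only [slope_def_field, Function.comp, AffineMap.lineMap_apply_zero,
      AffineMap.lineMap_apply_one, sub_zero, div_one] at this
    linarith
  have h1 := key x y
  have h2 := key y x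
  have : ⟪gradient Φ x - gradient Φ y, x - y⟫ = -⟪gradient Φ x, y - x⟫ - ⟪gradient Φ y, x - y⟫ := by
    rw [inner_sub_left, ← inner_neg_right, neg_sub]
  linarith

lemma grad_contDiff (Φ : H → ℝ) (hΦ : ContDiff ℝ 2 Φ) : ContDiff ℝ 1 (gradient Φ) := by
  have h : ContDiff ℝ 1 (fderiv ℝ Φ) := hΦ.fderiv_right (by norm_num)
  exact (InnerProductSpace.toDual ℝ H).symm.toContinuousLinearEquiv.contDiff.comp h

lemma hess_nonneg (G : H → H) (hG : ContDiff ℝ 1 G) (hm : ∀ x y, 0 ≤ ⟪G x - G y, x - y⟫)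
    (x v : H) : 0 ≤ ⟪v, fderiv ℝ G x v⟫ := by
  have h2 : HasDerivAt (fun s : ℝ => x + s • v) v 0 := by
    simpa using ((hasDerivAt_id (0:ℝ)).smul_const v).const_add x
  have h1 : HasFDerivAt G (fderiv ℝ G x) (x + (0:ℝ) • v) := by
    simpa using (hG.differentiable (by norm_num) x).hasFDerivAt
  have h3 := h1.comp_hasDerivAt (0:ℝ) h2
  have h4 := (hasDerivAt_const (0:ℝ) v).inner ℝ h3
  have h5 : Monotone fun s : ℝ => ⟪v, (G ∘ fun s : ℝ => x + s • v) s⟫ := by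
    intro s t hst
    rcases hst.eq_or_lt with rfl | hst
    · exact le_rfl
    have := hm (x + t • v) (x + s • v)
    rw [show x + t • v - (x + s • v) = (t - s) • v by module, inner_smul_right,
      inner_sub_left, real_inner_comm, real_inner_comm v] at this
    have := nonneg_of_mul_nonneg_right this (sub_pos.2 hst)
    simp only [Function.comp]
    linarith
  simpa using h4.nonneg_of_monotone h5

lemma gron {f f' : ℝ → ℝ} {a b C : ℝ} (hf : ∀ t ∈ Icc a b, HasDerivAt f (f' t) t)
    (hb : ∀ t ∈ Icc a b, f' t ≤ C * f t) : ∀ t ∈ Icc a b, f t ≤ f a * Real.exp (C * (t - a)) := by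
  have hd : ∀ t ∈ Icc a b, HasDerivAt (fun t => f t * Real.exp (-(C * (t - a))))
      (f' t * Real.exp (-(C * (t - a))) + f t * (Real.exp (-(C * (t - a))) * -(C * 1))) t := by
    intro t ht
    exact (hf t ht).mul ((((hasDerivAt_id t).sub_const a).const_mul C).neg.exp)
  have hanti : AntitoneOn (fun t => f t * Real.exp (-(C * (t - a)))) (Icc a b) := by
    refine antitoneOn_of_hasDerivWithinAt_nonpos (convex_Icc a b)
      (fun t ht => (hd t ht).continuousAt.continuousWithinAt)
      (fun t ht => (hd t (interior_subset ht)).hasDerivWithinAt) ?_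
    intro t ht
    have h1 := hb t (interior_subset ht)
    have h2 := Real.exp_pos (-(C * (t - a)))
    nlinarith
  intro t ht
  have := hanti (left_mem_Icc.2 (ht.1.trans ht.2)) ht ht.1
  simp only [sub_self, mul_zero, neg_zero, Real.exp_zero, mul_one] at this
  rw [Real.exp_neg] at this
  rwa [← div_eq_mul_inv, div_le_iff₀ (Real.exp_pos _)] at this

lemma inner_bd (c A : ℝ) (hc : |c| ≤ A) (u v : H) :
    2 * (c * ⟪u, v⟫) ≤ A * (‖u‖ ^ 2 + ‖v‖ ^ 2) := by
  have h1 := abs_real_inner_le_norm u v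
  have h2 : |c * ⟪u, v⟫| ≤ A * (‖u‖ * ‖v‖) := by
    rw [abs_mul]; exact mul_le_mul hc h1 (abs_nonneg _) ((abs_nonneg _).trans hc)
  have h3 := le_abs_self (c * ⟪u, v⟫)
  have h4 : 0 ≤ A := (abs_nonneg _).trans hc
  nlinarith [mul_nonneg h4 (sq_nonneg (‖u‖ - ‖v‖))]

lemma coef_bd {α β t₀ t : ℝ} (hα : 0 < α) (hβ : 0 < β) (ht₀ : 0 < t₀) (ht : t₀ ≤ t) :
    |β⁻¹ - α / t| ≤ β⁻¹ + α / t₀ := by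
  have h1 : α / t ≤ α / t₀ := by gcongr
  have h2 : 0 < α / t := div_pos hα (ht₀.trans_le ht)
  have h3 : 0 < β⁻¹ := inv_pos.2 hβ
  rw [abs_le]; constructor <;> linarith

lemma sys_unique (G : H → H) (hm : ∀ x y, 0 ≤ ⟪G x - G y, x - y⟫) {α β t₀ T : ℝ}
    (hα : 0 < α) (hβ : 0 < β) (ht₀ : 0 < t₀) {x w X W : ℝ → H}
    (h1 : ∀ t ∈ Icc t₀ T, DSys G α β x w t) (h2 : ∀ t ∈ Icc t₀ T, DSys G α β X W t)
    (hx : x t₀ = X t₀) (hw : w t₀ = W t₀) :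
    ∀ t ∈ Icc t₀ T, x t = X t ∧ w t = W t := by
  set dx : ℝ → H := fun t => x t - X t with hdx
  set dy : ℝ → H := fun t => (w t - W t) - (β⁻¹ - α / t) • (x t - X t) with hdy
  have hd1 : ∀ t ∈ Icc t₀ T, HasDerivAt dx
      (dy t + (β⁻¹ - α / t) • dx t - β • (G (x t) - G (X t))) t := by
    intro t ht
    refine HasDerivAt.congr_deriv (show HasDerivAt dx _ t from (h1 t ht).1.sub (h2 t ht).1) ?_
    simp only [hdx, hdy]; module
  have hd2 : ∀ t ∈ Icc t₀ T, HasDerivAt dy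
      (-(β⁻¹ • (dy t + (β⁻¹ - α / t) • dx t)) - (α / t ^ 2) • dx t) t := by
    intro t ht
    have htp : t ≠ 0 := (ht₀.trans_le ht.1).ne'
    have ha : HasDerivAt (fun t : ℝ => β⁻¹ - α / t) (α / t ^ 2) t := by
      refine HasDerivAt.congr_deriv (((hasDerivAt_const t α).div (hasDerivAt_id t) htp).const_sub β⁻¹) ?_
      simp; ring
    refine HasDerivAt.congr_deriv (show HasDerivAt dy _ t from
      ((h1 t ht).2.sub (h2 t ht).2).sub (ha.smul ((h1 t ht).1.sub (h2 t ht).1))) ?_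
    simp only [hdx, hdy, Pi.sub_apply]; module
  have hD := fun t ht => (hd1 t ht).norm_sq.add (hd2 t ht).norm_sq
  have hg := gron (C := 1 + 2 * (β⁻¹ + α / t₀) + (β⁻¹ * (β⁻¹ + α / t₀) + α / t₀ ^ 2)) hD ?_
  · intro t ht
    have := hg t ht
    have hx0 : dx t₀ = 0 := by simp [hdx, hx]
    have hy0 : dy t₀ = 0 := by simp [hdy, hx, hw]
    simp [hx0, hy0] at this
    have e1 : ‖dx t‖ ^ 2 = 0 := by nlinarith [sq_nonneg ‖dx t‖, sq_nonneg ‖dy t‖]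
    have e2 : ‖dy t‖ ^ 2 = 0 := by nlinarith [sq_nonneg ‖dx t‖, sq_nonneg ‖dy t‖]
    have e1 : dx t = 0 := by simpa using e1
    have e2 : dy t = 0 := by simpa using e2
    have e3 : x t = X t := sub_eq_zero.1 e1
    refine ⟨e3, ?_⟩
    simp only [hdy, e3, sub_self, smul_zero, sub_zero] at e2
    exact sub_eq_zero.1 e2
  · intro t ht
    have hA := coef_bd hα hβ ht₀ ht.1
    have hb := inv_pos.2 hβ
    have hc : |-(β⁻¹ * (β⁻¹ - α / t) + α / t ^ 2)| ≤ β⁻¹ * (β⁻¹ + α / t₀) + α / t₀ ^ 2 := by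
      rw [abs_neg]
      refine (abs_add_le _ _).trans (add_le_add ?_ ?_)
      · rw [abs_mul, abs_of_pos hb]; gcongr
      · rw [abs_of_pos (div_pos hα (pow_pos (ht₀.trans_le ht.1) 2))]
        have := ht.1
        gcongr
    have i1 := inner_bd (β⁻¹ - α / t) _ hA (dx t) (dx t)
    have i2 := inner_bd _ _ hc (dy t) (dx t)
    have i3 := inner_bd 1 1 (by simp) (dx t) (dy t)
    have i4 := mul_nonneg hβ.le (hm (x t) (X t))
    have i5 := mul_nonneg hb.le (sq_nonneg ‖dy t‖)
    have i6 : 0 ≤ (β⁻¹ + α / t₀) * ‖dy t‖ ^ 2 := mul_nonneg ((abs_nonneg _).trans hA) (sq_nonneg _)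
    rw [real_inner_comm] at i4
    change 0 ≤ β * ⟪dx t, G (x t) - G (X t)⟫ at i4
    change 2 * ⟪dx t, dy t + (β⁻¹ - α / t) • dx t - β • (G (x t) - G (X t))⟫ +
      2 * ⟪dy t, -(β⁻¹ • (dy t + (β⁻¹ - α / t) • dx t)) - (α / t ^ 2) • dx t⟫ ≤
      _ * (‖dx t‖ ^ 2 + ‖dy t‖ ^ 2)
    generalize G (x t) - G (X t) = g at i4 ⊢
    generalize dx t = a at *
    generalize dy t = b at *
    simp only [inner_add_right, inner_sub_right, inner_neg_right, inner_smul_right,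
      real_inner_self_eq_norm_sq] at i1 i2 i3 i4 ⊢
    nlinarith

lemma sys_lip (G : H → H) (hG : ContDiff ℝ 1 G) (hm : ∀ x y, 0 ≤ ⟪G x - G y, x - y⟫)
    {α β t₀ : ℝ} (hα : 0 < α) (hβ : 0 < β) (ht₀ : 0 < t₀) (x₀ w₀ : H) (Tm : ℝ) :
    ∃ L : ℝ, 0 ≤ L ∧ ∀ T ≤ Tm, ∀ x w : ℝ → H, (∀ t ∈ Icc t₀ T, DSys G α β x w t) →
      x t₀ = x₀ → w t₀ = w₀ → ∀ s ∈ Icc t₀ T, ∀ t ∈ Icc t₀ T,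
        ‖x s - x t‖ ≤ L * |s - t| ∧ ‖w s - w t‖ ≤ L * |s - t| := by
  set A := β⁻¹ + α / t₀ with hAdef
  have hb := inv_pos.2 hβ
  have hA0 : 0 < A := by positivity
  set C := 3 * A + β⁻¹ with hC
  have hC0 : 0 < C := by positivity
  set E0 := ‖w₀ - β • G x₀‖ ^ 2 + ‖w₀‖ ^ 2 with hE0
  set M := Real.sqrt (E0 * Real.exp (C * (Tm - t₀))) with hM
  have hM0 : 0 ≤ M := Real.sqrt_nonneg _
  refine ⟨(1 + A + β⁻¹) * M, by positivity, ?_⟩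
  intro T hT x w hs hx hw
  set v : ℝ → H := fun t => w t - β • G (x t) with hv
  have hdv : ∀ t ∈ Icc t₀ T, HasDerivAt v
      ((β⁻¹ - α / t) • v t - β⁻¹ • w t - β • fderiv ℝ G (x t) (v t)) t := by
    intro t ht
    have := (hG.differentiable (by norm_num) (x t)).hasFDerivAt.comp_hasDerivAt t (hs t ht).1
    exact (hs t ht).2.sub (this.const_smul β)
  have hD := fun t ht => (hdv t ht).norm_sq.add (hs t ht).2.norm_sq
  have hg := gron (C := C) hD ?_
  · have hvb : ∀ t ∈ Icc t₀ T, ‖v t‖ ≤ M ∧ ‖w t‖ ≤ M := by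
      intro t ht
      have h1 := hg t ht
      have h2 : Real.exp (C * (t - t₀)) ≤ Real.exp (C * (Tm - t₀)) := by
        have := ht.2
        gcongr; linarith
      have h3 : 0 ≤ E0 := by positivity
      have h4 : ‖v t‖ ^ 2 + ‖w t‖ ^ 2 ≤ E0 * Real.exp (C * (Tm - t₀)) := by
        refine le_trans ?_ (mul_le_mul_of_nonneg_left h2 h3)
        simpa [hE0, hv, hx, hw] using h1
      constructor <;> apply Real.le_sqrt_of_sq_le <;>
        nlinarith [sq_nonneg ‖v t‖, sq_nonneg ‖w t‖]
    intro s hs' t ht'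
    have hbm := mul_nonneg hb.le hM0
    have ham := mul_nonneg hA0.le hM0
    constructor
    · have := (convex_Icc t₀ T).norm_image_sub_le_of_norm_hasDerivWithin_le
        (f := x) (C := (1 + A + β⁻¹) * M)
        (fun t ht => (hs t ht).1.hasDerivWithinAt)
        (fun t ht => (hvb t ht).1.trans (by nlinarith)) ht' hs'
      simpa using this
    · have := (convex_Icc t₀ T).norm_image_sub_le_of_norm_hasDerivWithin_le
        (f := w) (C := (1 + A + β⁻¹) * M)
        (fun t ht => (hs t ht).2.hasDerivWithinAt)
        (fun t ht => ?_) ht' hs'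
      · simpa using this
      · refine (norm_sub_le _ _).trans ?_
        rw [norm_smul, norm_smul, Real.norm_eq_abs, Real.norm_eq_abs, abs_of_pos hb]
        have h1 := mul_le_mul (coef_bd hα hβ ht₀ ht.1) (hvb t ht).1 (norm_nonneg _) hA0.le
        have h2 := mul_le_mul_of_nonneg_left (hvb t ht).2 hb.le
        simp only [hv] at h1
        nlinarith
  · intro t ht
    have hA := coef_bd hα hβ ht₀ ht.1
    have i1 := inner_bd (β⁻¹ - α / t) _ hA (v t) (v t)
    have i2 := inner_bd (-β⁻¹) β⁻¹ (by rw [abs_neg, abs_of_pos hb]) (v t) (w t)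
    have i3 := inner_bd (β⁻¹ - α / t) _ hA (w t) (v t)
    have i4 := mul_nonneg hβ.le (hess_nonneg G hG hm (x t) (v t))
    have i5 := mul_nonneg hb.le (sq_nonneg ‖w t‖)
    have i6 := mul_nonneg hA0.le (sq_nonneg ‖w t‖)
    rw [← hAdef] at i1 i3
    change 2 * ⟪v t, (β⁻¹ - α / t) • v t - β⁻¹ • w t - β • fderiv ℝ G (x t) (v t)⟫ +
      2 * ⟪w t, (β⁻¹ - α / t) • v t - β⁻¹ • w t⟫ ≤ C * (‖v t‖ ^ 2 + ‖w t‖ ^ 2)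
    simp only [inner_sub_right, inner_smul_right, real_inner_self_eq_norm_sq] at i1 i2 i3 i4 ⊢
    rw [hC]
    nlinarith

lemma sys_local (G : H → H) (hG : ContDiff ℝ 1 G) (α β : ℝ) {S : ℝ} (hS : 0 < S) (p q : H) :
    ∃ r > (0:ℝ), ∃ ε > (0:ℝ), ∀ T x₁ w₁, |T - S| ≤ r → ‖x₁ - p‖ ≤ r → ‖w₁ - q‖ ≤ r →
      ∃ x w : ℝ → H, x T = x₁ ∧ w T = w₁ ∧ ∀ t ∈ Ioo (T - ε) (T + ε), DSys G α β x w t := by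
  let F : ℝ × H × H → ℝ × H × H := fun z =>
    (1, z.2.2 - β • G z.2.1, (β⁻¹ - α / z.1) • (z.2.2 - β • G z.2.1) - β⁻¹ • z.2.2)
  have hF : ContDiffAt ℝ 1 F (S, p, q) := by
    have h1 : ContDiffAt ℝ 1 (fun z : ℝ × H × H => z.2.2 - β • G z.2.1) (S, p, q) := by
      fun_prop
    have h2 : ContDiffAt ℝ 1 (fun z : ℝ × H × H => β⁻¹ - α / z.1) (S, p, q) :=
      contDiffAt_const.sub (contDiffAt_const.div contDiffAt_fst hS.ne')
    exact contDiffAt_const.prodMk (h1.prodMk ((h2.smul h1).sub (by fun_prop)))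
  obtain ⟨r, hr, ε, hε, h⟩ :=
    hF.exists_forall_mem_closedBall_exists_eq_forall_mem_Ioo_hasDerivAt 0
  refine ⟨r, hr, ε, hε, ?_⟩
  intro T x₁ w₁ h1 h2 h3
  obtain ⟨γ, h0, hγ⟩ := h (T, x₁, w₁) (by
    rw [Metric.mem_closedBall, Prod.dist_eq, Prod.dist_eq, Real.dist_eq, dist_eq_norm, dist_eq_norm]
    simp [h1, h2, h3])
  have hfst : ∀ t ∈ Ioo (0 - ε) (0 + ε), HasDerivAt (fun t => (γ t).1) 1 t := fun t ht =>
    (hγ t ht).fst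
  have htime : ∀ t ∈ Ioo (0 - ε) (0 + ε), (γ t).1 = T + t := by
    intro t ht
    have := (convex_Ioo (0 - ε) (0 + ε)).norm_image_sub_le_of_norm_hasDerivWithin_le
        (f := fun t => (γ t).1 - t) (C := 0) (x := 0) (y := t)
        (fun t ht => ((hfst t ht).sub (hasDerivAt_id t)).hasDerivWithinAt)
        (fun t ht => by simp) (by simp [hε]) ht
    simp [h0] at this
    linarith
  refine ⟨fun t => (γ (t - T)).2.1, fun t => (γ (t - T)).2.2, by simp [h0], by simp [h0], ?_⟩
  intro t ht
  have ht' : t - T ∈ Ioo (0 - ε) (0 + ε) := ⟨by linarith [ht.1], by linarith [ht.2]⟩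
  have hd := (hγ _ ht').comp_sub_const t T
  have e := htime _ ht'
  have e' : (γ (t - T)).1 = t := by rw [e]; ring
  constructor
  · exact hd.snd.fst
  · have := hd.snd.snd
    simp only [F, e'] at this
    exact this

lemma hasDerivAt_glue {f g : ℝ → H} {T t : ℝ} {d : H} (hT : f T = g T)
    (hf : t ≤ T → HasDerivAt f d t) (hg : T ≤ t → HasDerivAt g d t) :
    HasDerivAt (fun s => if s ≤ T then f s else g s) d t := by
  rcases lt_trichotomy t T with h | rfl | h
  · refine (hf h.le).congr_of_eventuallyEq ?_
    filter_upwards [Iio_mem_nhds h] with s hs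
    rw [if_pos (le_of_lt hs)]
  · have h1 : HasDerivWithinAt (fun s => if s ≤ t then f s else g s) d (Iic t) t :=
      (hf le_rfl).hasDerivWithinAt.congr (fun s hs => if_pos hs) (if_pos le_rfl)
    have h2 : HasDerivWithinAt (fun s => if s ≤ t then f s else g s) d (Ici t) t := by
      refine (hg le_rfl).hasDerivWithinAt.congr (fun s hs => ?_) (by simp [hT])
      rcases (mem_Ici.1 hs).eq_or_lt with rfl | hs
      · simp [hT]
      · rw [if_neg (not_le.2 hs)]
    have := h1.union h2
    rwa [Iic_union_Ici, hasDerivWithinAt_univ] at this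
  · refine (hg h.le).congr_of_eventuallyEq ?_
    filter_upwards [Ioi_mem_nhds h] with s hs
    rw [if_neg (not_le.2 hs)]

lemma sys_exists (G : H → H) (hG : ContDiff ℝ 1 G) (hm : ∀ x y, 0 ≤ ⟪G x - G y, x - y⟫)
    {α β t₀ : ℝ} (hα : 0 < α) (hβ : 0 < β) (ht₀ : 0 < t₀) (x₀ w₀ : H) (T : ℝ) (hT : t₀ ≤ T) :
    ∃ x w : ℝ → H, x t₀ = x₀ ∧ w t₀ = w₀ ∧ ∀ t ∈ Icc t₀ T, DSys G α β x w t := by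
  set S : Set ℝ := {T | t₀ ≤ T ∧
    ∃ x w : ℝ → H, x t₀ = x₀ ∧ w t₀ = w₀ ∧ ∀ t ∈ Icc t₀ T, DSys G α β x w t} with hS
  by_contra hcon
  have hSb : ∀ R ∈ S, R ≤ T := by
    rintro R ⟨hR, x, w, h1, h2, h3⟩
    by_contra! hRT
    exact hcon ⟨x, w, h1, h2, fun t ht => h3 t ⟨ht.1, ht.2.trans hRT.le⟩⟩
  have hbdd : BddAbove S := ⟨T, hSb⟩
  have ht₀S : t₀ ∈ S := by
    obtain ⟨r, hr, ε, hε, h⟩ := sys_local G hG α β ht₀ x₀ w₀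
    obtain ⟨x, w, h1, h2, h3⟩ := h t₀ x₀ w₀ (by simp [hr.le]) (by simp [hr.le]) (by simp [hr.le])
    refine ⟨le_rfl, x, w, h1, h2, fun t ht => h3 t ⟨by linarith [ht.1], by linarith [ht.2]⟩⟩
  obtain ⟨u, hu, hlim, huS⟩ := exists_seq_tendsto_sSup ⟨t₀, ht₀S⟩ hbdd
  have hsup : t₀ ≤ sSup S := le_csSup hbdd ht₀S
  obtain ⟨L, hL0, hL⟩ := sys_lip G hG hm hα hβ ht₀ x₀ w₀ T
  choose hut x w hx hw hs using huS
  have hdist : ∀ n m, n ≤ m → ‖x n (u n) - x m (u m)‖ ≤ L * |u n - u m| ∧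
      ‖w n (u n) - w m (u m)‖ ≤ L * |u n - u m| := by
    intro n m hnm
    have hle := hu hnm
    have := sys_unique G hm hα hβ ht₀ (hs n) (fun t ht => hs m t ⟨ht.1, ht.2.trans hle⟩)
      ((hx n).trans (hx m).symm) ((hw n).trans (hw m).symm) (u n) ⟨hut n, le_rfl⟩
    rw [this.1, this.2]
    exact hL (u m) (hSb _ ⟨hut m, x m, w m, hx m, hw m, hs m⟩) (x m) (w m) (hs m) (hx m) (hw m)
      (u n) ⟨hut n, hle⟩ (u m) ⟨hut m, le_rfl⟩
  have hcauchy : ∀ z : ℕ → H, (∀ n m, n ≤ m → ‖z n - z m‖ ≤ L * |u n - u m|) → CauchySeq z := by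
    intro z hz
    rw [Metric.cauchySeq_iff']
    intro ε hε
    obtain ⟨N, hN⟩ := Metric.cauchySeq_iff'.1 hlim.cauchySeq (ε / (L + 1)) (by positivity)
    refine ⟨N, fun n hn => ?_⟩
    have h1 := hz N n hn
    have h2 := hN n hn
    rw [dist_comm, Real.dist_eq, lt_div_iff₀ (by positivity)] at h2
    rw [dist_comm, dist_eq_norm]
    nlinarith [abs_nonneg (u N - u n)]
  obtain ⟨p, hp⟩ := cauchySeq_tendsto_of_complete
    (hcauchy (fun n => x n (u n)) fun n m h => (hdist n m h).1)
  obtain ⟨q, hq⟩ := cauchySeq_tendsto_of_complete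
    (hcauchy (fun n => w n (u n)) fun n m h => (hdist n m h).2)
  obtain ⟨r, hr, ε, hε, h⟩ := sys_local G hG α β (ht₀.trans_le hsup) p q
  have e1 := hlim.eventually (Metric.closedBall_mem_nhds _ hr)
  have e2 := hp.eventually (Metric.closedBall_mem_nhds _ hr)
  have e3 := hq.eventually (Metric.closedBall_mem_nhds _ hr)
  have e4 := hlim.eventually (Ioi_mem_nhds (show sSup S - ε / 2 < sSup S by linarith))
  obtain ⟨n, ⟨⟨a1, a2⟩, a3⟩, a4⟩ := (((e1.and e2).and e3).and e4).exists
  rw [dist_eq_norm] at a1 a2 a3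
  obtain ⟨X, W, hX, hW, hXW⟩ := h (u n) (x n (u n)) (w n (u n)) a1 a2 a3
  have hnew : u n + ε / 2 ∈ S := by
    refine ⟨by linarith [hut n], fun s => if s ≤ u n then x n s else X s,
      fun s => if s ≤ u n then w n s else W s, by simp [hut n, hx], by simp [hut n, hw], ?_⟩
    intro t ht
    constructor
    · refine hasDerivAt_glue hX.symm (fun htn => ?_) (fun htn => ?_)
      · simp only [if_pos htn]
        exact (hs n t ⟨ht.1, htn⟩).1
      · have hd := (hXW t ⟨by linarith, by linarith [ht.2]⟩).1
        rcases htn.eq_or_lt with h | h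
        · subst h
          simpa [hX, hW] using hd
        · simpa only [if_neg (not_le.2 h)] using hd
    · refine hasDerivAt_glue hW.symm (fun htn => ?_) (fun htn => ?_)
      · simp only [if_pos htn]
        exact (hs n t ⟨ht.1, htn⟩).2
      · have hd := (hXW t ⟨by linarith, by linarith [ht.2]⟩).2
        rcases htn.eq_or_lt with h | h
        · subst h
          simpa [hX, hW] using hd
        · simpa only [if_neg (not_le.2 h)] using hd
  have := le_csSup hbdd hnew
  have a4' : sSup S - ε / 2 < u n := a4
  linarith

lemma sys_global (G : H → H) (hG : ContDiff ℝ 1 G) (hm : ∀ x y, 0 ≤ ⟪G x - G y, x - y⟫)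
    {α β t₀ : ℝ} (hα : 0 < α) (hβ : 0 < β) (ht₀ : 0 < t₀) (x₀ w₀ : H) :
    ∃ x w : ℝ → H, x t₀ = x₀ ∧ w t₀ = w₀ ∧ ∀ t ∈ Ici t₀, DSys G α β x w t := by
  have hex : ∀ s : ℝ, ∃ x w : ℝ → H, x t₀ = x₀ ∧ w t₀ = w₀ ∧
      ∀ t ∈ Icc t₀ (max s t₀ + 1), DSys G α β x w t := fun s =>
    sys_exists G hG hm hα hβ ht₀ x₀ w₀ _ (by linarith [le_max_right s t₀])
  choose x w hx hw hs using hex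
  refine ⟨fun s => x (max s t₀) s, fun s => w (max s t₀) s, by simp [hx], by simp [hw], ?_⟩
  intro t ht
  have ht : t₀ ≤ t := ht
  have hmt : max t t₀ = t := max_eq_left ht
  have hev : ∀ᶠ s in 𝓝 t, x (max s t₀) s = x t s ∧ w (max s t₀) s = w t s := by
    have hright : ∀ s, t₀ ≤ s → s < t + 1 →
        x (max s t₀) s = x t s ∧ w (max s t₀) s = w t s := by
      intro s h1 h2
      rw [max_eq_left h1]
      refine sys_unique G hm hα hβ ht₀ (T := s) (fun r hr => hs s r ⟨hr.1, ?_⟩)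
        (fun r hr => hs t r ⟨hr.1, ?_⟩) ((hx _).trans (hx _).symm) ((hw _).trans (hw _).symm)
        s ⟨h1, le_rfl⟩
      · linarith [hr.2, le_max_left s t₀]
      · linarith [hr.2, le_max_left t t₀]
    rcases ht.eq_or_lt with rfl | hlt
    · filter_upwards [Iio_mem_nhds (show t₀ < t₀ + 1 by linarith)] with s hs2
      rcases le_total t₀ s with h | h
      · exact hright s h hs2
      · simp [max_eq_right h]
    · filter_upwards [Ioo_mem_nhds hlt (show t < t + 1 by linarith)] with s hs2
      exact hright s hs2.1.le hs2.2
  have hd := hs t t ⟨ht, by linarith [le_max_left t t₀]⟩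
  constructor
  · simp only [hmt]
    exact hd.1.congr_of_eventuallyEq (hev.mono fun s h => h.1)
  · simp only [hmt]
    exact hd.2.congr_of_eventuallyEq (hev.mono fun s h => h.2)

theorem stmt17 (α β t₀ : ℝ) (hα : 0 < α) (hβ : 0 < β) (ht₀ : 0 < t₀)
    (Φ : H → ℝ) (hconv : ConvexOn ℝ Set.univ Φ) (hΦ : ContDiff ℝ 2 Φ)
    (x₀ v₀ : H) :
    ∃ x x' x'' : ℝ → H,
      IsDINAVDSolution α β t₀ Φ x x' x'' ∧ x t₀ = x₀ ∧ x' t₀ = v₀ ∧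
      ∀ z z' z'' : ℝ → H,
        IsDINAVDSolution α β t₀ Φ z z' z'' → z t₀ = x₀ → z' t₀ = v₀ →
        ∀ t ∈ Set.Ici t₀, z t = x t := by
  have hG := grad_contDiff Φ hΦ
  have hm := grad_mono Φ hconv hΦ
  have hGd : ∀ y, HasFDerivAt (gradient Φ) (fderiv ℝ (gradient Φ) y) y := fun y =>
    (hG.differentiable (by norm_num) y).hasFDerivAt
  obtain ⟨x, w, hx, hw, hs⟩ := sys_global (gradient Φ) hG hm hα hβ ht₀ x₀ (v₀ + β • gradient Φ x₀)
  refine ⟨x, fun t => w t - β • gradient Φ (x t),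
    fun t => ((β⁻¹ - α / t) • (w t - β • gradient Φ (x t)) - β⁻¹ • w t)
      - β • fderiv ℝ (gradient Φ) (x t) (w t - β • gradient Φ (x t)), ⟨?_, ?_, ?_, ?_⟩, hx, ?_, ?_⟩
  · exact fun t ht => (hs t ht).1
  · intro t ht
    exact (hs t ht).2.sub (((hGd (x t)).comp_hasDerivAt t (hs t ht).1).const_smul β)
  · have hxc : ContinuousOn x (Ici t₀) := fun t ht => (hs t ht).1.continuousAt.continuousWithinAt
    have hwc : ContinuousOn w (Ici t₀) := fun t ht => (hs t ht).2.continuousAt.continuousWithinAt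
    have hgc : ContinuousOn (fun t => gradient Φ (x t)) (Ici t₀) :=
      hG.continuous.comp_continuousOn hxc
    have hfc : ContinuousOn (fun t => fderiv ℝ (gradient Φ) (x t)) (Ici t₀) :=
      (hG.continuous_fderiv (by norm_num)).comp_continuousOn hxc
    have hac : ContinuousOn (fun t : ℝ => β⁻¹ - α / t) (Ici t₀) :=
      continuousOn_const.sub (continuousOn_const.div continuousOn_id
        fun t ht => (ht₀.trans_le ht).ne')
    have hvc : ContinuousOn (fun t => w t - β • gradient Φ (x t)) (Ici t₀) :=
      hwc.sub (hgc.const_smul β)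
    exact ((hac.smul hvc).sub (hwc.const_smul _)).sub ((hfc.clm_apply hvc).const_smul β)
  · intro t ht
    have : gradient Φ (x t) = β⁻¹ • β • gradient Φ (x t) := by
      rw [smul_smul, inv_mul_cancel₀ hβ.ne', one_smul]
    have e : ∀ g y h : H, g = β⁻¹ • β • g →
        (β⁻¹ - α / t) • (y - β • g) - β⁻¹ • y - β • h + (α / t) • (y - β • g) + β • h + g = 0 := by
      intro g y h hg
      nth_rewrite 3 [hg]
      module
    exact e _ _ _ this
  · simp [hx, hw]
  · intro z z' z'' ⟨h1, h2, h3, h4⟩ hz hz' t ht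
    refine (sys_unique (gradient Φ) hm hα hβ ht₀ (T := t) (x := z)
      (w := fun t => z' t + β • gradient Φ (z t)) (X := x) (W := w) (fun s hs' => ?_)
      (fun s hs' => hs s hs'.1) (hz.trans hx.symm) (by simp [hz, hz', hw]) t ⟨ht, le_rfl⟩).1
    constructor
    · simpa using h1 s hs'.1
    · have hd := (h2 s hs'.1).add (((hGd (z s)).comp_hasDerivAt s (h1 s hs'.1)).const_smul β)
      refine HasDerivAt.congr_deriv (show HasDerivAt (fun t => z' t + β • gradient Φ (z t)) _ s from hd) ?_
      have h := h4 s hs'.1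
      have : β⁻¹ • β • gradient Φ (z s) = gradient Φ (z s) := by
        rw [smul_smul, inv_mul_cancel₀ hβ.ne', one_smul]
      have e : z'' s = -((α / s) • z' s + β • (fderiv ℝ (gradient Φ) (z s)) (z' s)
        + gradient Φ (z s)) := by
        rw [eq_neg_iff_add_eq_zero, ← h]; abel
      rw [e]
      simp only [add_sub_cancel_right, smul_add, this]
      module
end

section
/- Let α > 3, β > 0, t₀ > 0, let Φ : H → ℝ be convex and twice continuously differentiable with argmin Φ nonempty and with ∇Φ Lipschitz continuous on bounded subsets of H, let g : [t₀, ∞) → H be continuous with ∫_{t₀}^∞ t‖g(t)‖ dt < ∞, and let x : [t₀, ∞) → H be a twice continuously differentiable curve satisfying the perturbed equation ẍ(t) + (α/t)ẋ(t) + β∇²Φ(x(t))ẋ(t) + ∇Φ(x(t)) = g(t) for all t ≥ t₀. Then there exists x∞ ∈ argmin Φ such that x(t) converges weakly to x∞ as t → ∞, i.e., ⟨x(t), y⟩ → ⟨x∞, y⟩ for every y ∈ H. -/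
open Filter MeasureTheory Set
open scoped Topology RealInnerProductSpace

variable {H : Type*} [NormedAddCommGroup H] [InnerProductSpace ℝ H] [CompleteSpace H]

lemma aux_anti {f f' : ℝ → ℝ} {T : ℝ} (h : ∀ t, T ≤ t → HasDerivAt f (f' t) t)
    (h' : ∀ t, T ≤ t → f' t ≤ 0) : AntitoneOn f (Set.Ici T) := by
  apply antitoneOn_of_deriv_nonpos (convex_Ici T)
  · intro t ht
    exact (h t ht).continuousAt.continuousWithinAt
  · intro t ht
    rw [interior_Ici] at ht
    exact (h t (le_of_lt ht)).differentiableAt.differentiableWithinAt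
  · intro t ht
    rw [interior_Ici] at ht
    rw [(h t (le_of_lt ht)).deriv]
    exact h' t (le_of_lt ht)

lemma aux_anti_lim {f : ℝ → ℝ} {T b : ℝ} (h : AntitoneOn f (Set.Ici T))
    (hb : ∀ t, T ≤ t → b ≤ f t) : ∃ l, Tendsto f atTop (𝓝 l) := by
  have h1 : Antitone (fun t => f (max T t)) := fun s t hst =>
    h (Set.mem_Ici.2 (le_max_left _ _)) (Set.mem_Ici.2 (le_max_left _ _)) (max_le_max le_rfl hst)
  refine ⟨_, (tendsto_atTop_ciInf h1 ⟨b, ?_⟩).congr' ?_⟩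
  · rintro _ ⟨t, rfl⟩
    exact hb _ (le_max_left _ _)
  · filter_upwards [eventually_ge_atTop T] with t ht
    rw [max_eq_right ht]

/-- Gronwall type lemma. -/
lemma aux_gron {E E' D a : ℝ → ℝ} {T : ℝ} (hE : ∀ t, T ≤ t → HasDerivAt E (E' t) t)
    (hE0 : ∀ t, T ≤ t → 0 ≤ E t) (hD : Continuous D) (ha : Continuous a)
    (hD0 : ∀ t, T ≤ t → 0 ≤ D t) (ha0 : ∀ t, T ≤ t → 0 ≤ a t)
    (haI : IntegrableOn a (Set.Ioi T))
    (hle : ∀ t, T ≤ t → E' t ≤ - D t + a t * (1 + E t)) :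
    (∃ l, Tendsto E atTop (𝓝 l)) ∧ ∃ l, Tendsto (fun t => ∫ s in T..t, D s) atTop (𝓝 l) := by
  set A : ℝ → ℝ := fun t => ∫ s in T..t, a s with hA
  set I : ℝ → ℝ := fun t => ∫ s in T..t, D s with hI
  have hA' : ∀ t, HasDerivAt A (a t) t := fun t => (ha.integral_hasStrictDerivAt T t).hasDerivAt
  have hI' : ∀ t, HasDerivAt I (D t) t := fun t => (hD.integral_hasStrictDerivAt T t).hasDerivAt
  have hAlim : Tendsto A atTop (𝓝 (∫ s in Set.Ioi T, a s)) :=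
    intervalIntegral_tendsto_integral_Ioi T haI tendsto_id
  set M := ∫ s in Set.Ioi T, a s with hM
  have hAmono : MonotoneOn A (Set.Ici T) := by
    have := aux_anti (f := fun t => - A t) (f' := fun t => - a t) (T := T)
      (fun t _ => (hA' t).neg) (fun t ht => by have := ha0 t ht; linarith)
    intro s hs t ht hst
    have := this hs ht hst
    simp only at this
    linarith
  have hImono : AntitoneOn (fun t => - I t) (Set.Ici T) :=
    aux_anti (f' := fun t => - D t) (T := T)
      (fun t _ => (hI' t).neg) (fun t ht => by have := hD0 t ht; linarith)
  have hAM : ∀ t, T ≤ t → A t ≤ M := by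
    intro t ht
    refine ge_of_tendsto hAlim ?_
    filter_upwards [eventually_ge_atTop t] with s hs
    exact hAmono ht (le_trans ht hs) hs
  have hF' : ∀ t, T ≤ t → HasDerivAt (fun t => (1 + E t) * Real.exp (- A t))
      (E' t * Real.exp (- A t) + (1 + E t) * (Real.exp (- A t) * (- a t))) t := by
    intro t ht
    exact ((hE t ht).const_add 1).mul ((hA' t).neg.exp)
  have hG' : ∀ t, T ≤ t → HasDerivAt (fun t => (1 + E t) * Real.exp (- A t) + Real.exp (-M) * I t)
      (E' t * Real.exp (- A t) + (1 + E t) * (Real.exp (- A t) * (- a t)) + Real.exp (-M) * D t) t :=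
    fun t ht => (hF' t ht).add ((hI' t).const_mul _)
  have hFle : ∀ t, T ≤ t → E' t * Real.exp (- A t) + (1 + E t) * (Real.exp (- A t) * (- a t)) ≤
      - D t * Real.exp (- A t) := by
    intro t ht
    have := mul_le_mul_of_nonneg_right (hle t ht) (Real.exp_pos (- A t)).le
    nlinarith
  have hexp : ∀ t, T ≤ t → Real.exp (-M) ≤ Real.exp (- A t) := fun t ht =>
    Real.exp_le_exp.2 (neg_le_neg (hAM t ht))
  have hGanti := aux_anti hG' (fun t ht => by
    have h1 := hFle t ht
    have h2 := mul_le_mul_of_nonneg_left (hexp t ht) (hD0 t ht)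
    linarith)
  have hFanti := aux_anti hF' (fun t ht => by
    have h1 := hFle t ht
    have h2 := mul_nonneg (hD0 t ht) (Real.exp_pos (- A t)).le
    linarith)
  have hF0 : ∀ t, T ≤ t → 0 ≤ (1 + E t) * Real.exp (- A t) := fun t ht =>
    mul_nonneg (by linarith [hE0 t ht]) (Real.exp_pos _).le
  constructor
  · obtain ⟨l, hl⟩ := aux_anti_lim hFanti hF0
    have h2 : Tendsto (fun t => Real.exp (A t)) atTop (𝓝 (Real.exp M)) :=
      (Real.continuous_exp.tendsto M).comp hAlim
    refine ⟨l * Real.exp M - 1, ((hl.mul h2).sub_const 1).congr fun t => ?_⟩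
    rw [mul_assoc, ← Real.exp_add]
    simp
  · obtain ⟨l, hl⟩ := aux_anti_lim (f := fun t => - I t) (T := T)
      (b := - ((1 + E T) * Real.exp (- A T) + Real.exp (-M) * I T) / Real.exp (-M)) hImono (by
      intro t ht
      have h1 := hGanti (Set.mem_Ici.2 le_rfl) (Set.mem_Ici.2 ht) ht
      simp only at h1
      have h2 := hF0 t ht
      rw [div_le_iff₀ (Real.exp_pos _)]
      linarith)
    exact ⟨-l, by simpa using hl.neg⟩

lemma aux_ode_le {p p' : ℝ → ℝ} {T c l : ℝ} (hT : 0 < T) (hc : 0 < c)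
    (hp : ∀ t, T ≤ t → HasDerivAt p (p' t) t)
    (h : ∀ᶠ t in atTop, c * p t + t * p' t ≤ c * l) {ε : ℝ} (hε : 0 < ε) :
    ∀ᶠ t in atTop, p t < l + ε := by
  obtain ⟨S, hS⟩ := eventually_atTop.1 h
  set R := max S T with hR
  have hR0 : 0 < R := lt_of_lt_of_le hT (le_max_right _ _)
  have hd : ∀ t, R ≤ t → HasDerivAt (fun t => t ^ c * (p t - l))
      (c * t ^ (c - 1) * (p t - l) + t ^ c * p' t) t := by
    intro t ht
    have ht0 : 0 < t := lt_of_lt_of_le hR0 ht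
    exact (Real.hasDerivAt_rpow_const (Or.inl ht0.ne')).mul
      ((hp t (le_trans (le_max_right _ _) ht)).sub_const l)
  have hanti := aux_anti hd (fun t ht => by
    have ht0 : 0 < t := lt_of_lt_of_le hR0 ht
    have h1 := hS t (le_trans (le_max_left _ _) ht)
    have h2 : t ^ c = t ^ (c - 1) * t := by
      rw [Real.rpow_sub_one ht0.ne']; field_simp
    rw [h2]
    have h3 : 0 < t ^ (c - 1) := Real.rpow_pos_of_pos ht0 _
    have : t ^ (c - 1) * (c * p t + t * p' t - c * l) ≤ 0 :=
      mul_nonpos_of_nonneg_of_nonpos h3.le (by linarith)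
    linarith)
  set K := R ^ c * (p R - l) with hK
  have hlim : Tendsto (fun t : ℝ => t ^ c) atTop atTop := tendsto_rpow_atTop hc
  filter_upwards [hlim.eventually_gt_atTop (K / ε), eventually_ge_atTop R] with t h1 h2
  have ht0 : 0 < t := lt_of_lt_of_le hR0 h2
  have h3 := hanti (Set.mem_Ici.2 le_rfl) (Set.mem_Ici.2 h2) h2
  simp only at h3
  rw [div_lt_iff₀ hε] at h1
  have h4 : 0 < t ^ c := Real.rpow_pos_of_pos ht0 _
  by_contra hcon
  push Not at hcon
  have := mul_le_mul_of_nonneg_left (show ε ≤ p t - l by linarith) h4.le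
  linarith

lemma aux_ode {p p' : ℝ → ℝ} {T c l : ℝ} (hT : 0 < T) (hc : 0 < c)
    (hp : ∀ t, T ≤ t → HasDerivAt p (p' t) t)
    (h : Tendsto (fun t => c * p t + t * p' t) atTop (𝓝 l)) :
    Tendsto p atTop (𝓝 (l / c)) := by
  rw [tendsto_order]
  constructor
  · intro b hb
    set e := (l / c - b) / 2 with he
    have he0 : 0 < e := by linarith
    have hlt : c * (b + e) < l := by
      have : b + e < l / c := by linarith
      rw [lt_div_iff₀ hc] at this
      linarith
    have := aux_ode_le (p := fun t => - p t) (p' := fun t => - p' t) (l := - (b + e)) hT hc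
      (fun t ht => (hp t ht).neg) (by
        filter_upwards [h.eventually (lt_mem_nhds hlt)] with t ht
        linarith) he0
    filter_upwards [this] with t ht
    linarith
  · intro b hb
    set e := (b - l / c) / 2 with he
    have he0 : 0 < e := by linarith
    have hlt : l < c * (b - e) := by
      have : l / c < b - e := by linarith
      rw [div_lt_iff₀ hc] at this
      linarith
    have := aux_ode_le (l := b - e) hT hc hp (by
        filter_upwards [h.eventually (gt_mem_nhds hlt)] with t ht
        linarith) he0
    filter_upwards [this] with t ht
    linarith

lemma aux_convex {Φ : H → ℝ} (hconv : ConvexOn ℝ Set.univ Φ) {w : H}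
    (hd : DifferentiableAt ℝ Φ w) (y : H) : Φ w + ⟪gradient Φ w, y - w⟫ ≤ Φ y := by
  have h1 : ConvexOn ℝ Set.univ (fun s : ℝ => Φ (AffineMap.lineMap w y s)) := by
    exact hconv.comp_affineMap (AffineMap.lineMap (k := ℝ) w y)
  have h2 : HasDerivAt (fun s : ℝ => Φ (AffineMap.lineMap w y s)) ⟪gradient Φ w, y - w⟫ 0 := by
    have hg : HasFDerivAt Φ (InnerProductSpace.toDual ℝ H (gradient Φ w))
        (AffineMap.lineMap w y (0:ℝ)) := by
      simpa using hd.hasGradientAt.hasFDerivAt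
    have := hg.comp_hasDerivAt (0:ℝ) (AffineMap.hasDerivAt_lineMap (a := w) (b := y) (x := (0:ℝ)))
    exact this
  have := h1.le_slope_of_hasDerivAt (Set.mem_univ 0) (Set.mem_univ 1) one_pos h2
  rw [slope_def_field] at this
  simp only [AffineMap.lineMap_apply_one, AffineMap.lineMap_apply_zero, sub_zero, div_one] at this
  linarith

lemma aux_weak (x : ℝ → H) (C : ℝ) (U : Ultrafilter ℝ) (hb : ∀ᶠ t in (U : Filter ℝ), ‖x t‖ ≤ C) :
    ∃ z : H, ∀ y, Tendsto (fun t => ⟪x t, y⟫) U (𝓝 ⟪z, y⟫) := by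
  have hc := WeakDual.isCompact_closedBall (𝕜 := ℝ) (E := H) 0 C
  rw [isCompact_iff_ultrafilter_le_nhds] at hc
  let φ : ℝ → WeakDual ℝ H := fun t => StrongDual.toWeakDual (InnerProductSpace.toDual ℝ H (x t))
  obtain ⟨f, -, hf⟩ := hc (U.map φ) (by
    simp only [Ultrafilter.coe_map, le_principal_iff, mem_map]
    filter_upwards [hb] with t ht
    simpa [φ] using ht)
  refine ⟨(InnerProductSpace.toDual ℝ H).symm (WeakDual.toStrongDual f), fun y => ?_⟩
  have h1 : Tendsto φ U (𝓝 f) := hf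
  have h2 := ((WeakDual.eval_continuous y).tendsto f).comp h1
  simpa [φ, Function.comp_def] using h2

lemma aux_opial (x : ℝ → H) (S : Set H) (hS : S.Nonempty)
    (hlim : ∀ z ∈ S, ∃ l, Tendsto (fun t => ‖x t - z‖ ^ 2) atTop (𝓝 l))
    (hcl : ∀ (U : Ultrafilter ℝ) (z : H), (U : Filter ℝ) ≤ atTop →
      (∀ y, Tendsto (fun t => ⟪x t, y⟫) U (𝓝 ⟪z, y⟫)) → z ∈ S) :
    ∃ z ∈ S, ∀ y, Tendsto (fun t => ⟪x t, y⟫) atTop (𝓝 ⟪z, y⟫) := by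
  obtain ⟨z₀, hz₀⟩ := hS
  obtain ⟨l₀, hl₀⟩ := hlim z₀ hz₀
  have hb : ∀ᶠ t in atTop, ‖x t‖ ≤ ‖z₀‖ + (l₀ + 2) := by
    filter_upwards [hl₀.eventually (gt_mem_nhds (show l₀ < l₀ + 1 by linarith))] with t ht
    have h1 : ‖x t‖ ≤ ‖x t - z₀‖ + ‖z₀‖ := by simpa using norm_add_le (x t - z₀) z₀
    nlinarith [sq_nonneg (‖x t - z₀‖ - 1), norm_nonneg (x t - z₀)]
  have hex : ∀ U : Ultrafilter ℝ, (U : Filter ℝ) ≤ atTop →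
      ∃ z ∈ S, ∀ y, Tendsto (fun t => ⟪x t, y⟫) U (𝓝 ⟪z, y⟫) := by
    intro U hU
    obtain ⟨z, hz⟩ := aux_weak x _ U (hU hb)
    exact ⟨z, hcl U z hU hz, hz⟩
  obtain ⟨z, hzS, hz⟩ := hex (Ultrafilter.of atTop) (Ultrafilter.of_le atTop)
  refine ⟨z, hzS, fun y => ?_⟩
  rw [tendsto_iff_ultrafilter]
  intro U hU
  obtain ⟨w, hwS, hw⟩ := hex U hU
  suffices w = z by
    subst this; exact hw y
  obtain ⟨a, ha⟩ := hlim z hzS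
  obtain ⟨b, hb'⟩ := hlim w hwS
  have hconv : Tendsto (fun t => ⟪x t, w - z⟫) atTop (𝓝 ((a - b - ‖z‖ ^ 2 + ‖w‖ ^ 2) / 2)) := by
    refine ((((ha.sub hb').sub_const (‖z‖ ^ 2)).add_const (‖w‖ ^ 2)).div_const 2).congr fun t => ?_
    rw [norm_sub_sq_real, norm_sub_sq_real, inner_sub_right]
    ring
  have e1 := tendsto_nhds_unique (hw (w - z)) (hconv.mono_left hU)
  have e2 := tendsto_nhds_unique (hz (w - z)) (hconv.mono_left (Ultrafilter.of_le atTop))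
  have : ⟪w - z, w - z⟫ = 0 := by
    rw [inner_sub_left, e1, e2, sub_self]
  exact sub_eq_zero.1 (inner_self_eq_zero.1 this)

lemma aux_alg (lam κ β t d E : ℝ) (X V G γ : H) (hlam : 2 < lam) (hκ : 0 < κ) (hβ : 0 < β)
    (ht : β ≤ t) (hT : 1 + (lam + κ) * β ≤ (lam - 2) * t) (hd : 0 ≤ d) (hdD : d ≤ ⟪G, X⟫)
    (hE : (1 / 2) * ‖lam • X + t • (V + β • G)‖ ^ 2 ≤ E) :
    ⟪lam • X + t • (V + β • G), -(κ • V) - (t - β) • G + t • γ⟫ + lam * κ * ⟪X, V⟫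
      + ((2 * t - β + κ * β) * d + (t * (t - β) + κ * β * t) * ⟪G, V⟫)
      ≤ - ⟪G, X⟫ + (t * ‖γ‖) * (1 + E) := by
  have ht0 : 0 < t := lt_of_lt_of_le hβ ht
  have h1 : ⟪lam • X + t • (V + β • G), t • γ⟫ ≤ (t * ‖γ‖) * (1 + E) := by
    set v := lam • X + t • (V + β • G)
    rw [inner_smul_right]
    have h2 := real_inner_le_norm v γ
    have h3 : ‖v‖ ≤ 1 + E := by nlinarith [sq_nonneg (‖v‖ - 1)]
    have h4 : ‖v‖ * ‖γ‖ ≤ (1 + E) * ‖γ‖ := mul_le_mul_of_nonneg_right h3 (norm_nonneg _)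
    have := mul_le_mul_of_nonneg_left (h2.trans h4) ht0.le
    linarith
  have h5 : ⟪lam • X + t • (V + β • G), -(κ • V) - (t - β) • G⟫ =
      - lam * κ * ⟪X, V⟫ - lam * (t - β) * ⟪G, X⟫ - κ * t * ‖V‖ ^ 2
      - (t * (t - β) + κ * β * t) * ⟪G, V⟫ - β * t * (t - β) * ‖G‖ ^ 2 := by
    simp only [inner_add_left, inner_sub_right, inner_neg_right, inner_smul_left,
      inner_smul_right, real_inner_self_eq_norm_sq, RCLike.conj_to_real,
      real_inner_comm G X, real_inner_comm V G, smul_add, smul_smul]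
    ring
  rw [inner_add_right, h5]
  have h6 : 0 ≤ κ * t * ‖V‖ ^ 2 := by positivity
  have h7 : 0 ≤ β * t * (t - β) * ‖G‖ ^ 2 :=
    mul_nonneg (mul_nonneg (by positivity) (by linarith)) (by positivity)
  have h8 : (2 * t - β + κ * β) * d ≤ (2 * t + κ * β) * ⟪G, X⟫ := by
    have : (2 * t + κ * β) * d ≤ (2 * t + κ * β) * ⟪G, X⟫ :=
      mul_le_mul_of_nonneg_left hdD (by positivity)
    nlinarith [mul_nonneg hβ.le hd]
  have h9 : 0 ≤ ((lam - 2) * t - (1 + (lam + κ) * β)) * ⟪G, X⟫ :=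
    mul_nonneg (by linarith) (hd.trans hdD)
  nlinarith

/-- The Lyapunov function. -/
noncomputable def auxE (β lam κ : ℝ) (Φ : H → ℝ) (x x' : ℝ → H) (z : H) (t : ℝ) : ℝ :=
  (1 / 2) * ‖lam • (x t - z) + t • (x' t + β • gradient Φ (x t))‖ ^ 2
    + lam * κ * ((1 / 2) * ‖x t - z‖ ^ 2) + (t * (t - β) + κ * β * t) * (Φ (x t) - Φ z)

lemma aux_grad_diff {Φ : H → ℝ} (hΦ : ContDiff ℝ 2 Φ) : ContDiff ℝ 1 (gradient Φ) := by
  have h : ContDiff ℝ 1 (fderiv ℝ Φ) := hΦ.fderiv_right (by norm_num)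
  exact (InnerProductSpace.toDual ℝ H).symm.contDiff.comp h

lemma aux_hasDeriv {α β : ℝ} {Φ : H → ℝ} (hΦ : ContDiff ℝ 2 Φ) {γ : H} {x x' x'' : ℝ → H}
    {t : ℝ} (ht : t ≠ 0)
    (hx' : HasDerivAt x (x' t) t) (hx'' : HasDerivAt x' (x'' t) t)
    (heq : x'' t + (α / t) • x' t + β • (fderiv ℝ (gradient Φ) (x t)) (x' t)
        + gradient Φ (x t) = γ) {lam κ : ℝ} (hlk : lam + κ = α - 1) (z : H) :
    HasDerivAt (auxE β lam κ Φ x x' z)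
      (⟪lam • (x t - z) + t • (x' t + β • gradient Φ (x t)),
          -(κ • x' t) - (t - β) • gradient Φ (x t) + t • γ⟫ + lam * κ * ⟪x t - z, x' t⟫
      + ((2 * t - β + κ * β) * (Φ (x t) - Φ z)
        + (t * (t - β) + κ * β * t) * ⟪gradient Φ (x t), x' t⟫)) t := by
  have hG : HasDerivAt (fun t => gradient Φ (x t)) (fderiv ℝ (gradient Φ) (x t) (x' t)) t :=
    ((aux_grad_diff hΦ).differentiable (by norm_num) (x t)).hasFDerivAt.comp_hasDerivAt t hx'
  have hP : HasDerivAt (fun t => Φ (x t)) ⟪gradient Φ (x t), x' t⟫ t := by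
    have h1 : HasFDerivAt Φ (InnerProductSpace.toDual ℝ H (gradient Φ (x t))) (x t) :=
      (hΦ.differentiable (by norm_num) (x t)).hasGradientAt.hasFDerivAt
    exact h1.comp_hasDerivAt t hx'
  have hX : HasDerivAt (fun t => x t - z) (x' t) t := hx'.sub_const z
  have hv : HasDerivAt (fun t => lam • (x t - z) + t • (x' t + β • gradient Φ (x t)))
      (-(κ • x' t) - (t - β) • gradient Φ (x t) + t • γ) t := by
    have h := (hX.const_smul lam).add ((hasDerivAt_id t).smul (hx''.add (hG.const_smul β)))
    refine h.congr_deriv ?_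
    have hα : α = lam + κ + 1 := by linarith
    have h3 : t • (α / t) • x' t = α • x' t := by
      rw [smul_smul]; congr 1; field_simp
    simp only [id, Pi.add_apply, Pi.smul_apply]
    rw [← heq, smul_add, smul_add t (_ + _ + _), smul_add t (_ + _), smul_add t (x'' t) ((α / t) • x' t), h3, hα]
    module
  have hq : HasDerivAt (fun t : ℝ => t * (t - β) + κ * β * t) (2 * t - β + κ * β) t := by
    have h := ((hasDerivAt_id t).mul ((hasDerivAt_id t).sub_const β)).add
      ((hasDerivAt_id t).const_mul (κ * β))
    refine h.congr_deriv ?_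
    simp only [id]; ring
  have h := ((hv.norm_sq.const_mul (1/2)).add ((hX.norm_sq.const_mul (1/2)).const_mul (lam * κ))).add
    (hq.mul (hP.sub_const (Φ z)))
  refine h.congr_deriv ?_
  ring

lemma aux_energy {α β t₀ T : ℝ} (hβ : 0 < β) (ht₀ : 0 < t₀)
    {Φ : H → ℝ} (hconv : ConvexOn ℝ Set.univ Φ) (hΦ : ContDiff ℝ 2 Φ)
    {g : ℝ → H} (hg : ContinuousOn g (Set.Ici t₀))
    (hgint : IntegrableOn (fun t => t * ‖g t‖) (Set.Ici t₀))
    {x x' x'' : ℝ → H}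
    (hx' : ∀ t ∈ Set.Ici t₀, HasDerivAt x (x' t) t)
    (hx'' : ∀ t ∈ Set.Ici t₀, HasDerivAt x' (x'' t) t)
    (heq : ∀ t ∈ Set.Ici t₀,
      x'' t + (α / t) • x' t + β • (fderiv ℝ (gradient Φ) (x t)) (x' t)
        + gradient Φ (x t) = g t) {lam κ : ℝ} (hlam : 2 < lam) (hκ : 0 < κ)
    (hlk : lam + κ = α - 1) {z : H} (hz : ∀ w, Φ z ≤ Φ w)
    (hT0 : t₀ ≤ T) (hTβ : β ≤ T) (hT : 1 + (α - 1) * β ≤ (lam - 2) * T) :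
    (∃ l, Tendsto (auxE β lam κ Φ x x' z) atTop (𝓝 l)) ∧
    ∃ l, Tendsto (fun t => ∫ s in T..t, ⟪gradient Φ (x (max t₀ s)), x (max t₀ s) - z⟫)
      atTop (𝓝 l) := by
  have hmax : Continuous (fun s : ℝ => max t₀ s) := by fun_prop
  have hmem : ∀ s : ℝ, max t₀ s ∈ Set.Ici t₀ := fun s => Set.mem_Ici.2 (le_max_left _ _)
  have hxc : ContinuousOn x (Set.Ici t₀) := fun t ht => (hx' t ht).continuousAt.continuousWithinAt
  have hxm : Continuous (fun s => x (max t₀ s)) := hxc.comp_continuous hmax hmem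
  have hgm : Continuous (fun s => g (max t₀ s)) := hg.comp_continuous hmax hmem
  have hGm : Continuous (fun s => gradient Φ (x (max t₀ s))) :=
    (aux_grad_diff hΦ).continuous.comp hxm
  have hdiff := hΦ.differentiable (by norm_num)
  have hDle : ∀ w, Φ w - Φ z ≤ ⟪gradient Φ w, w - z⟫ := by
    intro w
    have h1 := aux_convex hconv (hdiff w) z
    rw [← neg_sub w z, inner_neg_right] at h1
    linarith
  have hTpos : 0 < T := lt_of_lt_of_le ht₀ hT0
  have hcoef : ∀ t, T ≤ t → 0 ≤ t * (t - β) + κ * β * t := by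
    intro t ht
    have : 0 < t := by linarith
    have : 0 ≤ t - β := by linarith
    positivity
  refine aux_gron (a := fun s => max t₀ s * ‖g (max t₀ s)‖)
    (fun t ht => aux_hasDeriv (γ := g t) hΦ (by linarith) (hx' t (hT0.trans ht)) (hx'' t (hT0.trans ht))
      (heq t (hT0.trans ht)) hlk z) ?_ (hGm.inner (hxm.sub continuous_const))
    (hmax.mul hgm.norm) ?_ ?_ ?_ ?_
  · intro t ht
    have h1 := hcoef t ht
    have h2 : 0 ≤ Φ (x t) - Φ z := by linarith [hz (x t)]
    have : 0 < lam := by linarith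
    unfold auxE
    positivity
  · intro t _
    have := hDle (x (max t₀ t))
    linarith [hz (x (max t₀ t))]
  · intro t _
    exact mul_nonneg (ht₀.le.trans (le_max_left _ _)) (norm_nonneg _)
  · refine (hgint.mono_set (Set.Ioi_subset_Ici hT0)).congr_fun ?_ measurableSet_Ioi
    intro t ht
    have : max t₀ t = t := max_eq_right (hT0.trans (le_of_lt ht))
    simp only [this]
  · intro t ht
    have hm : max t₀ t = t := max_eq_right (hT0.trans ht)
    simp only [hm]
    apply aux_alg lam κ β t _ _ _ _ _ _ hlam hκ hβ (hTβ.trans ht)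
    · rw [hlk]
      exact hT.trans (mul_le_mul_of_nonneg_left ht (by linarith))
    · linarith [hz (x t)]
    · exact hDle _
    · have h1 := hcoef t ht
      have h2 : 0 ≤ Φ (x t) - Φ z := by linarith [hz (x t)]
      have h3 : 0 < lam := by linarith
      have h4 := mul_nonneg h1 h2
      have h5 : 0 ≤ lam * κ * ((1 / 2) * ‖x t - z‖ ^ 2) := by positivity
      unfold auxE
      linarith

theorem stmt19 (α β t₀ : ℝ) (hα : 3 < α) (hβ : 0 < β) (ht₀ : 0 < t₀)
    (Φ : H → ℝ) (hconv : ConvexOn ℝ Set.univ Φ) (hΦ : ContDiff ℝ 2 Φ)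
    (hne : ∃ z : H, ∀ w, Φ z ≤ Φ w)
    (hlip : ∀ s : Set H, Bornology.IsBounded s →
      ∃ K : NNReal, LipschitzOnWith K (gradient Φ) s)
    (g : ℝ → H) (hg : ContinuousOn g (Set.Ici t₀))
    (hgint : IntegrableOn (fun t => t * ‖g t‖) (Set.Ici t₀))
    (x x' x'' : ℝ → H)
    (hx' : ∀ t ∈ Set.Ici t₀, HasDerivAt x (x' t) t)
    (hx'' : ∀ t ∈ Set.Ici t₀, HasDerivAt x' (x'' t) t)
    (hcont : ContinuousOn x'' (Set.Ici t₀))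
    (heq : ∀ t ∈ Set.Ici t₀,
      x'' t + (α / t) • x' t + β • (fderiv ℝ (gradient Φ) (x t)) (x' t)
        + gradient Φ (x t) = g t) :
    ∃ xinf : H, (∀ w, Φ xinf ≤ Φ w) ∧
      ∀ y : H, Tendsto (fun t => ⟪x t, y⟫) atTop (𝓝 ⟪xinf, y⟫) := by
  set δ := (α - 3) / 3 with hδ
  have hδ0 : 0 < δ := by linarith
  have hα' : α = 3 + 3 * δ := by linarith
  have hdiff := hΦ.differentiable (by norm_num)
  set T := t₀ + 2 * β + (1 + (α - 1) * β) / δ with hTdef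
  have hq0 : 0 < (1 + (α - 1) * β) / δ := by
    have : 0 < α - 1 := by linarith
    positivity
  have hT0 : t₀ ≤ T := by linarith
  have hTβ : 2 * β ≤ T := by linarith
  have hTpos : 0 < T := by linarith
  have hTδ : 1 + (α - 1) * β ≤ δ * T := by
    have h1 : (1 + (α - 1) * β) / δ ≤ T := by linarith
    rw [div_le_iff₀ hδ0] at h1
    linarith
  have hE1 : ∀ z, (∀ w, Φ z ≤ Φ w) → _ := fun z hz =>
    aux_energy (T := T) (lam := 2 + δ) (κ := 2 * δ) hβ ht₀ hconv hΦ hg hgint hx' hx'' heq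
      (by linarith) (by linarith) (by linarith) hz hT0 (by linarith) (by linarith)
  have hE2 : ∀ z, (∀ w, Φ z ≤ Φ w) → _ := fun z hz =>
    aux_energy (T := T) (lam := 2 + 2 * δ) (κ := δ) hβ ht₀ hconv hΦ hg hgint hx' hx'' heq
      (by linarith) (by linarith) (by linarith) hz hT0 (by linarith)
      (by have := mul_pos hδ0 hTpos; linarith)
  have hval : ∀ z, (∀ w, Φ z ≤ Φ w) →
      Tendsto (fun t => t * (Φ (x t) - Φ z)) atTop (𝓝 0) := by
    intro z hz
    obtain ⟨⟨l, hl⟩, -⟩ := hE1 z hz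
    have hlim : Tendsto (fun t : ℝ => 2 * (l + 1) / t) atTop (𝓝 0) :=
      tendsto_const_nhds.div_atTop tendsto_id
    refine tendsto_of_tendsto_of_tendsto_of_le_of_le' tendsto_const_nhds hlim ?_ ?_
    · filter_upwards [eventually_ge_atTop T] with t ht
      exact mul_nonneg (by linarith) (by linarith [hz (x t)])
    · filter_upwards [eventually_ge_atTop T, hl.eventually (gt_mem_nhds (lt_add_one l))] with t ht h1
      have ht0 : 0 < t := by linarith
      have hd : 0 ≤ Φ (x t) - Φ z := by linarith [hz (x t)]
      have h2 : (t * (t - β) + 2 * δ * β * t) * (Φ (x t) - Φ z) ≤ l + 1 := by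
        unfold auxE at h1
        have : 0 ≤ (1 / 2) * ‖(2 + δ) • (x t - z) + t • (x' t + β • gradient Φ (x t))‖ ^ 2
          + (2 + δ) * (2 * δ) * ((1 / 2) * ‖x t - z‖ ^ 2) := by positivity
        linarith
      have h3 : t * t / 2 ≤ t * (t - β) + 2 * δ * β * t := by
        have : 0 < 2 * δ * β * t := by positivity
        nlinarith
      rw [le_div_iff₀ ht0]
      have := mul_le_mul_of_nonneg_right h3 hd
      linarith
  obtain ⟨z₀, hz₀⟩ := hne
  have hval0 : Tendsto (fun t => Φ (x t)) atTop (𝓝 (Φ z₀)) := by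
    have h1 := (hval z₀ hz₀).mul (tendsto_inv_atTop_zero (𝕜 := ℝ))
    have h2 := (h1.add_const (Φ z₀)).congr' (f₂ := fun t => Φ (x t)) (by
      filter_upwards [eventually_gt_atTop 0] with t ht
      field_simp
      ring)
    simpa using h2
  obtain ⟨xi, hxi, hw⟩ := aux_opial x {z | ∀ w, Φ z ≤ Φ w} ⟨z₀, hz₀⟩ (by
    intro z hz
    obtain ⟨⟨l1, hl1⟩, ⟨lI, hlI⟩⟩ := hE1 z hz
    obtain ⟨⟨l2, hl2⟩, -⟩ := hE2 z hz
    set I : ℝ → ℝ := fun t => ∫ s in T..t, ⟪gradient Φ (x (max t₀ s)), x (max t₀ s) - z⟫ with hI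
    have hmax : Continuous (fun s : ℝ => max t₀ s) := by fun_prop
    have hmem : ∀ s : ℝ, max t₀ s ∈ Set.Ici t₀ := fun s => Set.mem_Ici.2 (le_max_left _ _)
    have hxc : ContinuousOn x (Set.Ici t₀) :=
      fun t ht => (hx' t ht).continuousAt.continuousWithinAt
    have hxm : Continuous (fun s => x (max t₀ s)) := hxc.comp_continuous hmax hmem
    have hGm : Continuous (fun s => gradient Φ (x (max t₀ s))) :=
      (aux_grad_diff hΦ).continuous.comp hxm
    have hI' : ∀ t, T ≤ t → HasDerivAt I ⟪gradient Φ (x t), x t - z⟫ t := by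
      intro t ht
      have hD : Continuous (fun s => ⟪gradient Φ (x (max t₀ s)), x (max t₀ s) - z⟫) :=
        hGm.inner (hxm.sub continuous_const)
      have h := (hD.integral_hasStrictDerivAt T t).hasDerivAt
      have hm : max t₀ t = t := max_eq_right (hT0.trans ht)
      simp only [hm] at h
      exact h
    have hp : ∀ t, T ≤ t → HasDerivAt (fun t => (1 / 2) * ‖x t - z‖ ^ 2 + β * I t)
        (⟪x t - z, x' t⟫ + β * ⟪gradient Φ (x t), x t - z⟫) t := by
      intro t ht
      have h := (((hx' t (hT0.trans ht)).sub_const z).norm_sq.const_mul (1 / 2)).add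
        ((hI' t ht).const_mul β)
      refine h.congr_deriv ?_
      ring
    have hk : Tendsto (fun t => (α - 1) * ((1 / 2) * ‖x t - z‖ ^ 2 + β * I t) +
        t * (⟪x t - z, x' t⟫ + β * ⟪gradient Φ (x t), x t - z⟫)) atTop
        (𝓝 ((l2 - l1) / δ + β * 0 + (α - 1) * β * lI)) := by
      refine ((((hl2.sub hl1).div_const δ).add ((hval z hz).const_mul β)).add
        (hlI.const_mul ((α - 1) * β))).congr fun t => ?_
      have hv : ∀ lam : ℝ, ‖lam • (x t - z) + t • (x' t + β • gradient Φ (x t))‖ ^ 2 =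
          lam ^ 2 * ‖x t - z‖ ^ 2 + 2 * lam * t *
            (⟪x t - z, x' t⟫ + β * ⟪gradient Φ (x t), x t - z⟫)
          + ‖t • (x' t + β • gradient Φ (x t))‖ ^ 2 := by
        intro lam
        rw [norm_add_sq_real, norm_smul, mul_pow, Real.norm_eq_abs, sq_abs, inner_smul_left,
          inner_smul_right, inner_add_right, inner_smul_right,
          real_inner_comm (x t - z) (gradient Φ (x t))]
        simp only [RCLike.conj_to_real]
        ring
      unfold auxE
      rw [hv, hv, hα']
      field_simp
      ring
    have hlim := aux_ode hTpos (show 0 < α - 1 by linarith) hp hk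
    refine ⟨_, ((hlim.sub (hlI.const_mul β)).const_mul 2).congr fun t => ?_⟩
    ring) (by
    intro U z hU hz w
    refine le_trans ?_ (hz₀ w)
    have h1 : Tendsto (fun t => Φ z + ⟪x t, gradient Φ z⟫ - ⟪z, gradient Φ z⟫) U (𝓝 (Φ z)) := by
      simpa using ((hz (gradient Φ z)).const_add (Φ z)).sub_const ⟪z, gradient Φ z⟫
    refine le_of_tendsto_of_tendsto' h1 (hval0.mono_left hU) fun t => ?_
    have h2 := aux_convex hconv (hdiff z) (x t)
    rw [inner_sub_right, real_inner_comm, real_inner_comm z] at h2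
    linarith)
  exact ⟨xi, hxi, hw⟩
end
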